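/- Let G be a connected simple graph with n > 3 vertices, m edges, and maximum degree Δ(G). If Δ(G) < n − (2m − 3(n − 1))/(n − 3), then mc(G) = m − n + 2. -/

import Mathlib

open SimpleGraph Filter Real

/-- An edge-coloring `c` (colors on vertex pairs, only the values on edges matter)
of `G` is a monochromatic connection coloring (MC-coloring) if every two vertices
are joined by a path all of whose edges receive the same color. -/
def IsMCColoring {V : Type*} (G : SimpleGraph V) (c : Sym2 V → ℕ) : Prop :=
  ∀ u v : V, ∃ p : G.Walk u v, p.IsPath ∧ ∃ k : ℕ, ∀ e ∈ p.edges, c e = k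

/-- `mcNum G` is the maximum number of colors (counted on the edges of `G`)
used in an MC-coloring of `G`; it is `0` if `G` admits no MC-coloring
(in particular if `G` is disconnected). -/
noncomputable def mcNum {V : Type*} (G : SimpleGraph V) : ℕ :=
  sSup {k | ∃ c : Sym2 V → ℕ, IsMCColoring G c ∧ (Set.image c G.edgeSet).ncard = k}

/-! Suppose an MC-coloring uses more than `m - n + 2` colors. Let the excess of a graph be the sum
of `|C| - 2` over its nontrivial components `C`. Each color class has more edges than excess, so
the excesses of all color classes add up to at most `n - 3`. Let `C` be a component of a color
class and `v` a vertex outside `C`. Each of the `n - 1 - deg v` non-neighbors of `v` shares a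
component of some color class with `v`, and a component containing `v` and `t` of its non-neighbors
has at least `t + 2` vertices. These components and `C` share the excess `n - 3`, so
`|C| ≤ deg v ≤ Δ(G)`. Since a connected graph on `C` has at least `|C| - 1` edges, it leaves at
most `(|C| - 1)(|C| - 2)` ordered pairs non-adjacent; summing over all components, `G` has at most
`(Δ(G) - 1)(n - 3)` ordered non-adjacent pairs, which contradicts the bound on `Δ(G)`. Conversely,
one color on a spanning tree and a private color on every other edge give `m - n + 2` colors. -/

section Components

variable {V : Type*} [Fintype V] [DecidableEq V] (H : SimpleGraph V) [DecidableRel H.Adj]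

/-- The vertices of the component of `v` at distance at least two from `v`: those that `H` joins to
`v` without an edge. -/
def distantFinset (v : V) : Finset V := {w | v ≠ w ∧ ¬ H.Adj v w ∧ H.Reachable v w}

/-- The excess of `H`: the sum of `|C| - 2` over the components `C` of `H`, a lower bound for the
number of colors lost by giving all edges of `H` the same color. Truncated subtraction lets isolated
vertices contribute `0`. -/
noncomputable def componentExcess : ℕ := ∑ C : H.ConnectedComponent, (C.supp.ncard - 2)

lemma card_distantFinset_add_degree_add_one (v : V) :
    (distantFinset H v).card + H.degree v + 1 = (H.connectedComponentMk v).supp.ncard := by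
  have hdisj : Disjoint (distantFinset H v) (H.neighborFinset v) := by
    simp +contextual [Finset.disjoint_left, distantFinset]
  have hsupp : (H.connectedComponentMk v).supp.toFinset =
      insert v (distantFinset H v ∪ H.neighborFinset v) := by
    ext w
    have hadj : H.Adj v w → H.Reachable v w := Adj.reachable
    have hrefl : v = w → H.Reachable v w := fun h ↦ h ▸ Reachable.rfl
    simp only [Set.mem_toFinset, ConnectedComponent.mem_supp_iff, ConnectedComponent.eq,
      reachable_comm (u := w), distantFinset, Finset.mem_insert, Finset.mem_union,
      Finset.mem_filter_univ, mem_neighborFinset, eq_comm (a := w)]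
    tauto
  rw [Set.ncard_eq_toFinset_card', hsupp, Finset.card_insert_of_notMem (by simp [distantFinset]),
    Finset.card_union_of_disjoint hdisj, card_neighborFinset_eq_degree]

lemma card_distantFinset_le (v : V) :
    (distantFinset H v).card ≤ (H.connectedComponentMk v).supp.ncard - 2 := by
  obtain hempty | ⟨w, hw⟩ := (distantFinset H v).eq_empty_or_nonempty
  · simp [hempty]
  · obtain ⟨hvw, -, hreach⟩ := Finset.mem_filter_univ w |>.1 hw
    have := hreach.degree_pos_left hvw
    have := card_distantFinset_add_degree_add_one H v
    omega

variable {H}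

lemma sum_sum_supp_toFinset {M : Type*} [AddCommMonoid M] (f : V → M) :
    ∑ C : H.ConnectedComponent, ∑ v ∈ C.supp.toFinset, f v = ∑ v, f v := by
  classical
  rw [← Finset.sum_fiberwise Finset.univ H.connectedComponentMk f]
  refine Finset.sum_congr rfl fun C _ ↦ Finset.sum_congr ?_ fun _ _ ↦ rfl
  ext v
  simp

lemma two_mul_ncard_supp_le (C : H.ConnectedComponent) :
    2 * C.supp.ncard ≤ ∑ v ∈ C.supp.toFinset, H.degree v + 2 := by
  classical
  have hconn := C.connected_toSimpleGraph.card_vert_le_card_edgeSet_add_one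
  have hdeg : ∑ v : C.supp, (H.induce C.supp).degree v = ∑ v ∈ C.supp.toFinset, H.degree v := by
    rw [Finset.sum_subtype C.supp.toFinset (p := (· ∈ C.supp)) (by simp)]
    refine Finset.sum_congr rfl fun v _ ↦ degree_induce_of_neighborSet_subset fun w hw ↦ ?_
    exact C.mem_supp_of_adj_mem_supp v.2 hw
  rw [sum_degrees_eq_twice_card_edges, edgeFinset_card, ← Nat.card_eq_fintype_card] at hdeg
  change C.supp.ncard ≤ Nat.card (H.induce C.supp).edgeSet + 1 at hconn
  omega

lemma sum_card_distantFinset_supp_le (C : H.ConnectedComponent) :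
    ∑ v ∈ C.supp.toFinset, (distantFinset H v).card ≤ (C.supp.ncard - 1) * (C.supp.ncard - 2) := by
  have hsum : ∑ v ∈ C.supp.toFinset, (distantFinset H v).card +
      ∑ v ∈ C.supp.toFinset, H.degree v = C.supp.ncard * (C.supp.ncard - 1) := by
    rw [← Finset.sum_add_distrib, Set.ncard_eq_toFinset_card', ← smul_eq_mul, ← Finset.sum_const]
    refine Finset.sum_congr rfl fun v hv ↦ ?_
    have hvC : H.connectedComponentMk v = C := by simpa using hv
    rw [← Set.ncard_eq_toFinset_card', ← hvC, ← card_distantFinset_add_degree_add_one,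
      Nat.add_sub_cancel]
  have hfactor (t : ℕ) : t * (t - 1) = (t - 1) * (t - 2) + 2 * (t - 1) := by
    obtain _ | _ | t := t <;> grind
  have hdeg := two_mul_ncard_supp_le C
  rw [hfactor] at hsum
  omega

lemma sum_card_distantFinset_le_mul_componentExcess {D : ℕ}
    (hD : ∀ C : H.ConnectedComponent, C.supp.ncard ≤ D) :
    ∑ v, (distantFinset H v).card ≤ (D - 1) * componentExcess H := by
  rw [← sum_sum_supp_toFinset (H := H), componentExcess, Finset.mul_sum]
  gcongr with C
  refine (sum_card_distantFinset_supp_le C).trans ?_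
  gcongr
  exact hD C

lemma ncard_supp_sub_two_le_componentExcess (C : H.ConnectedComponent) :
    C.supp.ncard - 2 ≤ componentExcess H :=
  Finset.single_le_sum (f := fun C : H.ConnectedComponent ↦ C.supp.ncard - 2)
    (fun _ _ ↦ Nat.zero_le _) (Finset.mem_univ C)

lemma card_distantFinset_le_componentExcess (v : V) :
    (distantFinset H v).card ≤ componentExcess H :=
  (card_distantFinset_le H v).trans (ncard_supp_sub_two_le_componentExcess _)

lemma ncard_supp_sub_two_add_card_distantFinset_le {C : H.ConnectedComponent} {v : V}
    (hv : v ∉ C.supp) :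
    C.supp.ncard - 2 + (distantFinset H v).card ≤ componentExcess H := by
  grw [card_distantFinset_le H v]
  exact Finset.add_le_sum (f := fun C : H.ConnectedComponent ↦ C.supp.ncard - 2)
    (fun _ _ ↦ Nat.zero_le _) (Finset.mem_univ _) (Finset.mem_univ _) (Ne.symm hv)

lemma componentExcess_lt_card_edgeFinset (hH : H ≠ ⊥) :
    componentExcess H < H.edgeFinset.card := by
  obtain ⟨a, b, hab⟩ := ne_bot_iff_exists_adj.1 hH
  have hcard : 1 < (H.connectedComponentMk a).supp.ncard :=
    (Set.one_lt_ncard).2 ⟨a, rfl, b, ConnectedComponent.sound hab.symm.reachable, hab.ne⟩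
  have hlt : ∑ C : H.ConnectedComponent, 2 * (C.supp.ncard - 2) <
      ∑ C : H.ConnectedComponent, ∑ v ∈ C.supp.toFinset, H.degree v := by
    refine Finset.sum_lt_sum (fun C _ ↦ ?_) ⟨H.connectedComponentMk a, Finset.mem_univ _, ?_⟩
    · have := two_mul_ncard_supp_le C
      omega
    · have := two_mul_ncard_supp_le (H.connectedComponentMk a)
      omega
  rw [← Finset.mul_sum, sum_sum_supp_toFinset, sum_degrees_eq_twice_card_edges] at hlt
  exact lt_of_mul_lt_mul_left' hlt

end Components

section ReachabilityCover

variable {V ι : Type*} [Fintype V] [DecidableEq V] {G : SimpleGraph V} [DecidableRel G.Adj]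
  {s : Finset ι} {H : ι → SimpleGraph V} [∀ i, DecidableRel (H i).Adj]

lemma degree_compl_le_sum_card_distantFinset (hHG : ∀ i ∈ s, H i ≤ G)
    (hcover : ∀ ⦃u v⦄, u ≠ v → ∃ i ∈ s, (H i).Reachable u v) (v : V) :
    Gᶜ.degree v ≤ ∑ i ∈ s, (distantFinset (H i) v).card := by
  have hsub : Gᶜ.neighborFinset v ⊆ s.biUnion fun i ↦ distantFinset (H i) v := fun w hw ↦ by
    obtain ⟨hvw, hnadj⟩ := (compl_adj _ _ _).1 ((mem_neighborFinset _ _ _).1 hw)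
    obtain ⟨i, hi, hreach⟩ := hcover hvw
    exact Finset.mem_biUnion.2
      ⟨i, hi, Finset.mem_filter_univ w |>.2 ⟨hvw, fun h ↦ hnadj (hHG i hi h), hreach⟩⟩
  rw [← card_neighborFinset_eq_degree]
  exact (Finset.card_le_card hsub).trans Finset.card_biUnion_le

lemma ncard_supp_le_degree_of_notMem (hHG : ∀ i ∈ s, H i ≤ G)
    (hcover : ∀ ⦃u v⦄, u ≠ v → ∃ i ∈ s, (H i).Reachable u v)
    (hexcess : ∑ i ∈ s, componentExcess (H i) + 3 ≤ Fintype.card V)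
    {i : ι} (hi : i ∈ s) {C : (H i).ConnectedComponent} {v : V} (hv : v ∉ C.supp) :
    C.supp.ncard ≤ G.degree v := by
  classical
  have hsum : C.supp.ncard - 2 + Gᶜ.degree v ≤ ∑ j ∈ s, componentExcess (H j) := by
    grw [degree_compl_le_sum_card_distantFinset hHG hcover v, ← Finset.add_sum_erase _ _ hi,
      ← Finset.add_sum_erase _ _ hi, ← add_assoc, ncard_supp_sub_two_add_card_distantFinset_le hv]
    gcongr with j
    exact card_distantFinset_le_componentExcess v
  rw [degree_compl] at hsum
  omega

lemma ncard_supp_le_maxDegree (hHG : ∀ i ∈ s, H i ≤ G)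
    (hcover : ∀ ⦃u v⦄, u ≠ v → ∃ i ∈ s, (H i).Reachable u v)
    (hexcess : ∑ i ∈ s, componentExcess (H i) + 3 ≤ Fintype.card V)
    {i : ι} (hi : i ∈ s) (C : (H i).ConnectedComponent) :
    C.supp.ncard ≤ G.maxDegree := by
  have hC : C.supp.ncard - 2 ≤ ∑ j ∈ s, componentExcess (H j) :=
    (ncard_supp_sub_two_le_componentExcess C).trans
      (Finset.single_le_sum (f := fun j ↦ componentExcess (H j)) (fun _ _ ↦ Nat.zero_le _) hi)
  obtain ⟨v, hv⟩ : ∃ v, v ∉ C.supp := by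
    refine (Set.ne_univ_iff_exists_notMem _).1 fun h ↦ ?_
    rw [h, Set.ncard_univ, Nat.card_eq_fintype_card] at hC
    omega
  exact (ncard_supp_le_degree_of_notMem hHG hcover hexcess hi hv).trans (G.degree_le_maxDegree v)

lemma two_mul_card_edgeFinset_compl_le (hHG : ∀ i ∈ s, H i ≤ G)
    (hcover : ∀ ⦃u v⦄, u ≠ v → ∃ i ∈ s, (H i).Reachable u v)
    (hexcess : ∑ i ∈ s, componentExcess (H i) + 3 ≤ Fintype.card V) :
    2 * Gᶜ.edgeFinset.card ≤ (G.maxDegree - 1) * ∑ i ∈ s, componentExcess (H i) :=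
  calc
    2 * Gᶜ.edgeFinset.card = ∑ v, Gᶜ.degree v := (sum_degrees_eq_twice_card_edges _).symm
    _ ≤ ∑ v, ∑ i ∈ s, (distantFinset (H i) v).card :=
      Finset.sum_le_sum fun v _ ↦ degree_compl_le_sum_card_distantFinset hHG hcover v
    _ = ∑ i ∈ s, ∑ v, (distantFinset (H i) v).card := Finset.sum_comm
    _ ≤ ∑ i ∈ s, (G.maxDegree - 1) * componentExcess (H i) := Finset.sum_le_sum fun _ hi ↦
      sum_card_distantFinset_le_mul_componentExcess (ncard_supp_le_maxDegree hHG hcover hexcess hi)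
    _ = (G.maxDegree - 1) * ∑ i ∈ s, componentExcess (H i) := (Finset.mul_sum ..).symm

end ReachabilityCover

section ColorClass

variable {V α : Type*} {G : SimpleGraph V}

/-- The spanning subgraph of `G` formed by the edges of color `k`; monochromatic connection is
reachability in one of these subgraphs. -/
def colorClass (G : SimpleGraph V) (c : Sym2 V → α) (k : α) : SimpleGraph V :=
  EdgeLabeling.labelGraph (G := G) (fun e ↦ c e) k

lemma colorClass_adj {c : Sym2 V → α} {k : α} {u v : V} :
    (colorClass G c k).Adj u v ↔ G.Adj u v ∧ c s(u, v) = k :=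
  (EdgeLabeling.labelGraph_adj u v).trans ⟨fun ⟨h, hk⟩ ↦ ⟨h, hk⟩, fun ⟨h, hk⟩ ↦ ⟨h, hk⟩⟩

lemma mem_edgeSet_colorClass {c : Sym2 V → α} {k : α} {e : Sym2 V} :
    e ∈ (colorClass G c k).edgeSet ↔ e ∈ G.edgeSet ∧ c e = k :=
  e.ind fun _ _ ↦ colorClass_adj

lemma colorClass_le (c : Sym2 V → α) (k : α) : colorClass G c k ≤ G :=
  EdgeLabeling.labelGraph_le _

instance [DecidableEq α] [DecidableRel G.Adj] (c : Sym2 V → α) (k : α) :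
    DecidableRel (colorClass G c k).Adj :=
  fun _ _ ↦ decidable_of_iff' _ colorClass_adj

lemma isMCColoring_iff_reachable_colorClass {c : Sym2 V → ℕ} :
    IsMCColoring G c ↔ ∀ u v, ∃ k, (colorClass G c k).Reachable u v := by
  refine forall₂_congr fun u v ↦ ⟨?_, ?_⟩
  · rintro ⟨p, -, k, hk⟩
    exact ⟨k, ⟨p.transfer _ fun e he ↦
      mem_edgeSet_colorClass.2 ⟨p.edges_subset_edgeSet he, hk e he⟩⟩⟩
  · rintro ⟨k, hreach⟩
    obtain ⟨p, hp⟩ := hreach.exists_isPath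
    refine ⟨p.mapLe (colorClass_le c k), (Walk.isPath_mapLe _).2 hp, k, fun e he ↦ ?_⟩
    rw [Walk.edges_mapLe_eq_edges] at he
    exact (mem_edgeSet_colorClass.1 (p.edges_subset_edgeSet he)).2

lemma mem_image_edgeFinset_iff_colorClass_ne_bot [Fintype G.edgeSet] [DecidableEq α]
    {c : Sym2 V → α} {k : α} : k ∈ G.edgeFinset.image c ↔ colorClass G c k ≠ ⊥ := by
  simp only [Finset.mem_image, mem_edgeFinset, ← edgeSet_nonempty, Set.Nonempty,
    mem_edgeSet_colorClass]

variable [Fintype V] [DecidableEq α] [DecidableRel G.Adj]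

lemma edgeFinset_colorClass (c : Sym2 V → α) (k : α) :
    (colorClass G c k).edgeFinset = {e ∈ G.edgeFinset | c e = k} := by
  ext e
  simp only [mem_edgeFinset, Finset.mem_filter, mem_edgeSet_colorClass]

variable [DecidableEq V]

lemma sum_componentExcess_colorClass_add_card_image_le (c : Sym2 V → α) :
    ∑ k ∈ G.edgeFinset.image c, componentExcess (colorClass G c k) + (G.edgeFinset.image c).card ≤
      G.edgeFinset.card := by
  rw [Finset.card_eq_sum_ones, ← Finset.sum_add_distrib,
    Finset.card_eq_sum_card_image c G.edgeFinset]
  refine Finset.sum_le_sum fun k hk ↦ ?_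
  rw [← edgeFinset_colorClass]
  exact componentExcess_lt_card_edgeFinset (mem_image_edgeFinset_iff_colorClass_ne_bot.1 hk)

lemma IsMCColoring.card_image_add_card_le {c : Sym2 V → ℕ} (hc : IsMCColoring G c)
    (hG : (G.maxDegree - 1) * (Fintype.card V - 3) < 2 * Gᶜ.edgeFinset.card) :
    (G.edgeFinset.image c).card + Fintype.card V ≤ G.edgeFinset.card + 2 := by
  by_contra! hcolors
  have hsum := sum_componentExcess_colorClass_add_card_image_le (G := G) c
  have hcover : ∀ ⦃u v⦄, u ≠ v → ∃ k ∈ G.edgeFinset.image c, (colorClass G c k).Reachable u v := by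
    intro u v huv
    obtain ⟨k, hk⟩ := isMCColoring_iff_reachable_colorClass.1 hc u v
    refine ⟨k, mem_image_edgeFinset_iff_colorClass_ne_bot.2 fun hbot ↦ huv ?_, hk⟩
    rwa [hbot, reachable_bot] at hk
  have hcompl := two_mul_card_edgeFinset_compl_le (fun k _ ↦ colorClass_le c k) hcover (by omega)
  refine hG.not_ge (hcompl.trans ?_)
  gcongr
  omega

end ColorClass

section SpanningTreeColoring

lemma card_image_ite_zero_add_card {α : Type*} [DecidableEq α] {s t : Finset α} (hst : s ⊆ t)
    (hs : s.Nonempty) {f : α → ℕ} (hf : f.Injective) :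
    (t.image fun a ↦ if a ∈ s then 0 else f a + 1).card + s.card = t.card + 1 := by
  set c : α → ℕ := fun a ↦ if a ∈ s then 0 else f a + 1
  have hinside : s.image c = {0} := by
    rw [← Finset.image_const hs]
    exact Finset.image_congr fun a ha ↦ if_pos ha
  have houtside : (t \ s).image c = (t \ s).image fun a ↦ f a + 1 :=
    Finset.image_congr fun a ha ↦ if_neg (Finset.mem_sdiff.1 ha).2
  have himage : t.image c = insert 0 ((t \ s).image fun a ↦ f a + 1) := by
    rw [← houtside, Finset.insert_eq, ← hinside, ← Finset.image_union,
      Finset.union_sdiff_of_subset hst]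
  rw [himage, Finset.card_insert_of_notMem (by simp),
    Finset.card_image_of_injective (f := fun a ↦ f a + 1) _ (Nat.succ_injective.comp hf)]
  have := Finset.card_sdiff_add_card_eq_card hst
  omega

lemma exists_isMCColoring_card_image_add_card_eq {V : Type*} [Fintype V] [Nontrivial V]
    {G : SimpleGraph V} [Fintype G.edgeSet] (hG : G.Connected) :
    ∃ c, IsMCColoring G c ∧
      (G.edgeFinset.image c).card + Fintype.card V = G.edgeFinset.card + 2 := by
  classical
  obtain ⟨T, hTG, hT⟩ := hG.exists_isTree_le
  obtain ⟨f, hf⟩ := exists_injective_nat (Sym2 V)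
  have hcardT : T.edgeFinset.card + 1 = Fintype.card V := hT.card_edgeFinset
  have hTne : T.edgeFinset.Nonempty := by
    have := Fintype.one_lt_card (α := V)
    exact Finset.card_pos.1 (by omega)
  refine ⟨fun e ↦ if e ∈ T.edgeFinset then 0 else f e + 1, ?_, ?_⟩
  · refine isMCColoring_iff_reachable_colorClass.2 fun u v ↦ ⟨0, ?_⟩
    refine (hT.connected u v).mono fun a b hab ↦ colorClass_adj.2 ⟨hTG hab, ?_⟩
    exact if_pos (mem_edgeFinset.2 hab)
  · have := card_image_ite_zero_add_card (edgeFinset_mono hTG) hTne hf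
    omega

end SpanningTreeColoring

section MonochromaticConnectionNumber

variable {V : Type*} [Fintype V] [DecidableEq V] (G : SimpleGraph V) [DecidableRel G.Adj]

lemma two_mul_card_edgeFinset_compl_add :
    2 * Gᶜ.edgeFinset.card + 2 * G.edgeFinset.card =
      Fintype.card V * (Fintype.card V - 1) := by
  rw [← sum_degrees_eq_twice_card_edges, ← sum_degrees_eq_twice_card_edges,
    ← Finset.sum_add_distrib, ← smul_eq_mul, ← Finset.card_univ, ← Finset.sum_const]
  refine Finset.sum_congr rfl fun v _ ↦ ?_
  rw [degree_compl, Finset.card_univ]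
  have := G.degree_lt_card_verts v
  omega

variable {G}

lemma maxDegree_sub_one_mul_lt_two_mul_card_edgeFinset_compl (hn : 3 < Fintype.card V)
    (hpos : 0 < G.maxDegree)
    (hΔ : (G.maxDegree : ℝ) <
      (Fintype.card V : ℝ) -
        (2 * (G.edgeFinset.card : ℝ) - 3 * ((Fintype.card V : ℝ) - 1)) /
          ((Fintype.card V : ℝ) - 3)) :
    (G.maxDegree - 1) * (Fintype.card V - 3) < 2 * Gᶜ.edgeFinset.card := by
  have hcompl : (2 * Gᶜ.edgeFinset.card + 2 * G.edgeFinset.card : ℝ) =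
      Fintype.card V * (Fintype.card V - 1) := by
    rw [← Nat.cast_pred (by omega)]
    exact_mod_cast two_mul_card_edgeFinset_compl_add G
  have hn' : (0 : ℝ) < Fintype.card V - 3 := sub_pos.2 (by exact_mod_cast hn)
  rw [lt_sub_comm, div_lt_iff₀ hn'] at hΔ
  rw [← Nat.cast_lt (α := ℝ), Nat.cast_mul, Nat.cast_pred hpos, Nat.cast_sub hn.le]
  push_cast
  linarith

lemma mcNum_add_card_eq [Nontrivial V] (hG : G.Connected)
    (hlt : (G.maxDegree - 1) * (Fintype.card V - 3) < 2 * Gᶜ.edgeFinset.card) :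
    mcNum G + Fintype.card V = G.edgeFinset.card + 2 := by
  obtain ⟨c, hc, hcard⟩ := exists_isMCColoring_card_image_add_card_eq hG
  have hncard (d : Sym2 V → ℕ) : (d '' G.edgeSet).ncard = (G.edgeFinset.image d).card := by
    rw [← Set.ncard_coe_finset, Finset.coe_image, coe_edgeFinset]
  have hgreatest : IsGreatest
      {k | ∃ d : Sym2 V → ℕ, IsMCColoring G d ∧ (d '' G.edgeSet).ncard = k}
      (G.edgeFinset.image c).card := by
    refine ⟨⟨c, hc, hncard c⟩, ?_⟩
    rintro _ ⟨d, hd, rfl⟩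
    have := hd.card_image_add_card_le hlt
    rw [hncard]
    omega
  rw [mcNum, hgreatest.csSup_eq, hcard]

end MonochromaticConnectionNumber

/-- If `G` is a connected graph with `n > 3` vertices, `m` edges, and maximum
degree `Δ(G) < n - (2m - 3(n-1))/(n-3)`, then `mc(G) = m - n + 2`. -/
theorem mc_eq_of_maxDegree_lt {V : Type*} [Fintype V] [DecidableEq V]
    (G : SimpleGraph V) [DecidableRel G.Adj] (hG : G.Connected)
    (hn : 3 < Fintype.card V)
    (hΔ : (G.maxDegree : ℝ) <
      (Fintype.card V : ℝ) -
        (2 * (G.edgeFinset.card : ℝ) - 3 * ((Fintype.card V : ℝ) - 1)) /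
          ((Fintype.card V : ℝ) - 3)) :
    (mcNum G : ℤ) = (G.edgeFinset.card : ℤ) - (Fintype.card V : ℤ) + 2 := by
  have : Nontrivial V := Fintype.one_lt_card_iff_nontrivial.1 (by omega)
  have hpos : 0 < G.maxDegree :=
    hG.preconnected.minDegree_pos_of_nontrivial.trans_le G.minDegree_le_maxDegree
  have hmc := mcNum_add_card_eq hG
    (maxDegree_sub_one_mul_lt_two_mul_card_edgeFinset_compl hn hpos hΔ)
  omega
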